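/- Let G = ([n], E) be a Dyck graph realized as the incomparability graph of the poset P_D (where i ≺_{P_D} j iff i < j and {i,j} ∉ E). Let π ∈ S_n, let o be the acyclic orientation of G induced by π (each edge {π(i),π(j)} with i<j directed from π(j) to π(i)), and let ω_o be the labeling produced by the greedy peeling algorithm. Then for every i ∈ [n−1]: π(i) ≻_{P_D} π(i+1) if and only if ω_o(π(i)) < ω_o(π(i+1)). -/

import Mathlib

/-
A vertex `p` receives a larger label than `q` as soon as `p` is never the largest source of a set
still containing `q`. This is immediate if `q` is a later neighbour of `p`. Suppose instead that
`p ≺ q` in `P_D` and that `p` comes at most one position after `q`. If `p` is the largest source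
of `S ∋ q`, let `v` be the last vertex of `S`, at or after the position of `q`, with `p ≺ v`. As
`v > p` is not a source, some later `u ∈ S` is adjacent to `v`. It also comes after `p`, so it is
not adjacent to the source `p` and is therefore comparable to it: `p ≺ u` contradicts the choice
of `v`, while `u ≺ p ≺ v` contradicts the adjacency of `u` and `v`.
-/

open Finset MvPolynomial
open scoped Classical

/-- One peeling step of the greedy labeling algorithm: the set of vertices remaining after
`k` steps; at each step the largest vertex of indegree `0` (with respect to the acyclic
orientation induced by `π`, which directs each edge from its later-appearing endpoint to
its earlier-appearing endpoint) is removed. -/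
noncomputable def remaining {n : ℕ} (G : SimpleGraph (Fin n)) (π : Equiv.Perm (Fin n)) :
    ℕ → Finset (Fin n)
  | 0 => Finset.univ
  | k + 1 =>
    let S := remaining G π k
    match (S.filter fun v => ∀ u ∈ S, ¬ (G.Adj u v ∧ π.symm v < π.symm u)).max with
    | some v => S.erase v
    | none => S

/-- The label `ω_o(v)` produced by the greedy peeling algorithm: the step at which `v` is
removed. -/
noncomputable def omegaO {n : ℕ} (G : SimpleGraph (Fin n)) (π : Equiv.Perm (Fin n))
    (v : Fin n) : ℕ :=
  sInf {k : ℕ | v ∉ remaining G π k}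

section Sources

variable {V ι : Type*} [LinearOrder ι]

/-- `v` is a source (a vertex of indegree `0`) of the subgraph of `G` induced on `S`, where each
edge is directed from its endpoint with the larger value of `pos` to the other one. -/
def IsSource (G : SimpleGraph V) (pos : V → ι) (S : Finset V) (v : V) : Prop :=
  v ∈ S ∧ ∀ u ∈ S, ¬ (G.Adj u v ∧ pos v < pos u)

/-- The relation `i ≺ j` of the poset `P_D` whose incomparability graph is `G`; it is defined for
every graph on ordered vertices, and its transitivity is a property of `G`. -/
def NonadjLT [LT V] (G : SimpleGraph V) (i j : V) : Prop :=
  i < j ∧ ¬ G.Adj i j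

variable {G : SimpleGraph V} {pos : V → ι} {S : Finset V}

lemma exists_isSource (G : SimpleGraph V) (pos : V → ι) (hS : S.Nonempty) :
    ∃ v, IsSource G pos S v := by
  obtain ⟨v, hvS, hmax⟩ := S.exists_max_image pos hS
  exact ⟨v, hvS, fun u hu h => (hmax u hu).not_gt h.2⟩

lemma isTrans_nonadjLT_of_forall_adj [Preorder V]
    (h : ∀ i j k : V, G.Adj i k → i < j → j < k → G.Adj i j) :
    IsTrans V (NonadjLT G) where
  trans i j k hij hjk :=
    ⟨hij.1.trans hjk.1, fun hik => hij.2 (h i j k hik hij.1 hjk.1)⟩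

variable [LinearOrder V]

lemma exists_isGreatest_isSource (G : SimpleGraph V) (pos : V → ι) (hS : S.Nonempty) :
    ∃ v, IsGreatest {v | IsSource G pos S v} v := by
  have hfin : {v | IsSource G pos S v}.Finite := S.finite_toSet.subset fun _ hv => hv.1
  obtain ⟨v, hv, hmax⟩ := Set.exists_max_image _ id hfin (exists_isSource G pos hS)
  exact ⟨v, hv, hmax⟩

lemma notMem_of_isGreatest_isSource [IsTrans V (NonadjLT G)] (hinj : pos.Injective) {p q : V}
    (hpq : NonadjLT G p q) (hpos : ∀ u, pos q < pos u → pos p ≤ pos u)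
    (hp : IsGreatest {v | IsSource G pos S v} p) : q ∉ S := by
  intro hqS
  obtain ⟨v, hv, hlast⟩ := (S.filter fun v => NonadjLT G p v ∧ pos q ≤ pos v).exists_max_image pos
    ⟨q, mem_filter.2 ⟨hqS, hpq, le_rfl⟩⟩
  obtain ⟨hvS, hpv, hqv⟩ := mem_filter.1 hv
  obtain ⟨u, huS, huv, hvu⟩ : ∃ u ∈ S, G.Adj u v ∧ pos v < pos u := by
    by_contra! hsource
    exact (hp.2 ⟨hvS, fun u hu h => (hsource u hu h.1).not_gt h.2⟩).not_gt hpv.1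
  have hne : p ≠ u := fun h => hpv.2 (h ▸ huv)
  have hpu : pos p < pos u := (hpos u (hqv.trans_lt hvu)).lt_of_ne (hinj.ne hne)
  have hnadj : ¬ G.Adj u p := fun h => hp.1.2 u huS ⟨h, hpu⟩
  rcases hne.lt_or_gt with hlt | hgt
  · have hu : NonadjLT G p u := ⟨hlt, fun h => hnadj h.symm⟩
    exact (hlast u (mem_filter.2 ⟨huS, hu, (hqv.trans_lt hvu).le⟩)).not_gt hvu
  · have hu : NonadjLT G u v := _root_.trans (⟨hgt, hnadj⟩ : NonadjLT G u p) hpv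
    exact hu.2 huv

end Sources

section Peeling

variable {n : ℕ} {G : SimpleGraph (Fin n)} {π : Equiv.Perm (Fin n)} {k : ℕ} {p q v : Fin n}

lemma remaining_succ_eq_erase
    (hv : IsGreatest {w | IsSource G π.symm (remaining G π k) w} v) :
    remaining G π (k + 1) = (remaining G π k).erase v := by
  have hmax : ((remaining G π k).filter fun w =>
      ∀ u ∈ remaining G π k, ¬ (G.Adj u w ∧ π.symm w < π.symm u)).max = v :=
    le_antisymm (Finset.max_le fun w hw => WithBot.coe_le_coe.2 (hv.2 (mem_filter.1 hw)))
      (le_max (mem_filter.2 hv.1))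
  simp only [remaining, hmax]

lemma antitone_remaining (G : SimpleGraph (Fin n)) (π : Equiv.Perm (Fin n)) :
    Antitone (remaining G π) := by
  refine antitone_nat_of_succ_le fun k => ?_
  rw [remaining]
  split
  · exact erase_subset _ _
  · exact le_rfl

lemma card_remaining (G : SimpleGraph (Fin n)) (π : Equiv.Perm (Fin n)) (k : ℕ) :
    (remaining G π k).card = n - k := by
  induction k with
  | zero => simp [remaining]
  | succ k ih =>
    rcases (remaining G π k).eq_empty_or_nonempty with hempty | hne
    · have hsucc : remaining G π (k + 1) = ∅ :=
        subset_empty.1 (hempty ▸ antitone_remaining G π k.le_succ)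
      rw [hempty, card_empty] at ih
      rw [hsucc, card_empty]
      omega
    · obtain ⟨v, hv⟩ := exists_isGreatest_isSource G π.symm hne
      rw [remaining_succ_eq_erase hv, card_erase_of_mem hv.1.1, ih, Nat.sub_sub]

lemma mem_remaining_iff_lt_omegaO : v ∈ remaining G π k ↔ k < omegaO G π v := by
  have hempty : remaining G π n = ∅ := by rw [← card_eq_zero, card_remaining, Nat.sub_self]
  have hremoved : v ∉ remaining G π (omegaO G π v) :=
    Nat.sInf_mem (s := {k | v ∉ remaining G π k}) ⟨n, by simp [hempty]⟩
  refine ⟨fun hv => ?_, fun hk => not_not.1 (Nat.notMem_of_lt_sInf hk)⟩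
  by_contra! hle
  exact hremoved (antitone_remaining G π hle hv)

lemma isGreatest_isSource_of_omegaO_eq_succ (hv : omegaO G π v = k + 1) :
    IsGreatest {w | IsSource G π.symm (remaining G π k) w} v := by
  have hmem : v ∈ remaining G π k := mem_remaining_iff_lt_omegaO.2 (by omega)
  have hnotMem : v ∉ remaining G π (k + 1) := fun h =>
    (mem_remaining_iff_lt_omegaO.1 h).ne hv.symm
  obtain ⟨w, hw⟩ := exists_isGreatest_isSource G π.symm ⟨v, hmem⟩
  have hvw : v = w := by
    by_contra hne
    exact hnotMem (remaining_succ_eq_erase hw ▸ mem_erase.2 ⟨hne, hmem⟩)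
  rwa [hvw]

lemma omegaO_lt_omegaO_of_forall_notMem
    (h : ∀ S, IsGreatest {v | IsSource G π.symm S v} p → q ∉ S) :
    omegaO G π q < omegaO G π p := by
  have hpos : 0 < omegaO G π p := mem_remaining_iff_lt_omegaO.1 (mem_univ p)
  obtain ⟨k, hk⟩ := Nat.exists_eq_succ_of_ne_zero hpos.ne'
  have hq : q ∉ remaining G π k := h _ (isGreatest_isSource_of_omegaO_eq_succ hk)
  rw [mem_remaining_iff_lt_omegaO] at hq
  omega

lemma omegaO_lt_omegaO_of_adj (hadj : G.Adj p q) (hpos : π.symm p < π.symm q) :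
    omegaO G π q < omegaO G π p :=
  omegaO_lt_omegaO_of_forall_notMem fun _ hp hq => hp.1.2 q hq ⟨hadj.symm, hpos⟩

lemma omegaO_lt_omegaO_of_nonadjLT [IsTrans (Fin n) (NonadjLT G)] (hpq : NonadjLT G p q)
    (hpos : (π.symm p : ℕ) ≤ π.symm q + 1) : omegaO G π q < omegaO G π p :=
  omegaO_lt_omegaO_of_forall_notMem fun _ =>
    notMem_of_isGreatest_isSource π.symm.injective hpq fun _ hu => hpos.trans hu

end Peeling

theorem key_lemma_general {n : ℕ} (G : SimpleGraph (Fin n)) [IsTrans (Fin n) (NonadjLT G)]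
    (π : Equiv.Perm (Fin n)) (a b : Fin n) (hab : (b : ℕ) = (a : ℕ) + 1) :
    NonadjLT G (π b) (π a) ↔ omegaO G π (π a) < omegaO G π (π b) := by
  have hlt : a < b := by omega
  refine ⟨fun h => omegaO_lt_omegaO_of_nonadjLT h (by simp [hab]), fun hω => ?_⟩
  by_contra hba
  refine hω.not_gt ?_
  by_cases hadj : G.Adj (π a) (π b)
  · exact omegaO_lt_omegaO_of_adj hadj (by simpa using hlt)
  · have hle : π a ≤ π b := not_lt.1 fun h => hba ⟨h, fun h' => hadj h'.symm⟩
    have hprec : NonadjLT G (π a) (π b) := ⟨hle.lt_of_ne (π.injective.ne hlt.ne), hadj⟩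
    exact omegaO_lt_omegaO_of_nonadjLT hprec (by simp only [Equiv.symm_apply_apply]; omega)

/-- **Key Lemma.** For a Dyck graph `G` and `π ∈ S_n`, with `o` the acyclic
orientation induced by `π` and `ω_o` the greedy peeling labeling: for consecutive chain
positions `a, b` (i.e. `b = a + 1`), `π(a) ≻_{P_D} π(b)` (that is, `π(b) < π(a)` and
`{π(b), π(a)} ∉ E`) holds if and only if `ω_o(π(a)) < ω_o(π(b))`. -/
theorem key_lemma {n : ℕ} (G : SimpleGraph (Fin n))
    (hDyck : ∀ i j i' j' : Fin n, G.Adj i j → i < j → i ≤ i' → i' < j' → j' ≤ j →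
      G.Adj i' j')
    (π : Equiv.Perm (Fin n)) (a b : Fin n) (hab : (b : ℕ) = (a : ℕ) + 1) :
    (π b < π a ∧ ¬ G.Adj (π b) (π a)) ↔ omegaO G π (π a) < omegaO G π (π b) := by
  have := isTrans_nonadjLT_of_forall_adj fun i j k h hij hjk =>
    hDyck i k i j h (hij.trans hjk) le_rfl hij hjk.le
  exact key_lemma_general G π a b hab
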